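/- Let k > 0, and let c_{m,n} be the (m,n)-Fourier coefficient of the smooth section θ_{b/k}(kx+u,kτ)·conj(θ_{a/k}(kx+v,kτ))·exp(-2πt(kx₂² + 2x₂v₂)) of L(0, u-v) with respect to the orthonormal basis φ_{u-v,m,n}(x) = exp(2πi(mx₁ + (n-(u-v))x₂)). Then c_{m,n} = 0 unless m ≡ b - a mod k, and in that case c_{m,n} = (2tk)^{-1/2} exp( -(π/(2tk))(|γ|² + 2·conj(γ)·u - 2γ·conj(v) + (u - conj(v))²) + (πin/k)(m+2a) ), where γ = mτ - n. -/

import Mathlib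

open Complex Real MeasureTheory

/-- The theta function with characteristic `r ∈ ℚ`. -/
noncomputable def theta (r : ℚ) (z σ : ℂ) : ℂ :=
  ∑' n : ℤ, Complex.exp ((π : ℂ) * I * σ * ((n : ℂ) + (r : ℂ)) ^ 2
    + 2 * (π : ℂ) * I * ((n : ℂ) + (r : ℂ)) * z)

/-!
Absorbing the translation by `kτx₂` into the characteristics cancels the Gaussian weight and turns
the section times `conj φ_{u-v,m,n}` into
`θ_{b/k+x₂}(kx₁+u, kτ) · conj θ_{a/k+x₂}(kx₁+v, kτ) · exp(-2πi(mx₁+nx₂))`.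
Expanding both series, the `x₁`-integral keeps only the pairs of terms whose frequencies differ by
`m`, which exist iff `k ∣ m - (b - a)` and then form a single sum over `i ∈ ℤ`. That sum is a
periodization in `x₂`, so the `x₂`-integral unfolds to one Gaussian integral over `ℝ`.
-/

open scoped ComplexConjugate

/-- The Gaussian `p ↦ exp (π i σ p² + 2 π i p z)` whose values on `ℤ + r` are the terms of
`theta r z σ`. -/
noncomputable def thetaKernel (σ z : ℂ) (p : ℝ) : ℂ :=
  cexp (π * I * σ * p ^ 2 + 2 * π * I * p * z)

/-- The theta function with real characteristic `r`. It extends `theta` beyond rational `r`, as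
translating `z` by a real multiple of `σ` shifts the characteristic by that real number. -/
noncomputable def realCharTheta (r : ℝ) (z σ : ℂ) : ℂ :=
  ∑' n : ℤ, thetaKernel σ z (n + r)

lemma theta_eq_realCharTheta (r : ℚ) (z σ : ℂ) : theta r z σ = realCharTheta r z σ := by
  simp [theta, realCharTheta, thetaKernel]

lemma conj_eq_sub_two_mul_im_mul_I (z : ℂ) : conj z = z - 2 * z.im * I := by
  have h := Complex.sub_conj z
  push_cast at h
  linear_combination -h

section ThetaKernel

variable (σ z w u v : ℂ)

lemma thetaKernel_add (p : ℝ) :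
    thetaKernel σ (z + w) p = thetaKernel σ z p * cexp (2 * π * I * p * w) := by
  rw [thetaKernel, thetaKernel, ← Complex.exp_add]
  ring_nf

lemma thetaKernel_add_mul (x p : ℝ) :
    thetaKernel σ (z + σ * x) p =
      cexp (-(π * I * σ * x ^ 2 + 2 * π * I * x * z)) * thetaKernel σ z (p + x) := by
  rw [thetaKernel, thetaKernel, ← Complex.exp_add]
  push_cast
  ring_nf

lemma thetaKernel_mul_cexp_neg_int (n i : ℤ) (x q : ℝ) :
    thetaKernel σ z (i + x + q) * cexp (-(2 * π * I * n * x)) =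
      cexp (2 * π * I * n * q) * thetaKernel σ (z - n) (i + x + q) := by
  have periodic : cexp (-(2 * π * I * n * x)) =
      cexp (2 * π * I * n * q) * cexp (2 * π * I * ↑(i + x + q) * -n) := by
    rw [← Complex.exp_add, Complex.exp_eq_exp_iff_exists_int]
    refine ⟨n * i, ?_⟩
    push_cast
    ring
  rw [periodic, sub_eq_add_neg, thetaKernel_add]
  ring

lemma thetaKernel_add_mul_conj (s y : ℝ) :
    thetaKernel σ u (y + s) * conj (thetaKernel σ v y) = thetaKernel σ u s *
      (cexp (I * (2 * π * (σ * s + u - conj v)) * y) * cexp (-(2 * π * σ.im : ℝ) * y ^ 2)) := by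
  simp only [thetaKernel, ← Complex.exp_conj, ← Complex.exp_add, map_add, map_mul, map_pow,
    conj_I, conj_ofReal, map_ofNat]
  congr 1
  push_cast
  linear_combination -π * I * y ^ 2 * conj_eq_sub_two_mul_im_mul_I σ + 2 * π * σ.im * y ^ 2 * I_sq

variable {σ}

lemma summable_thetaKernel (hσ : 0 < σ.im) (r : ℝ) :
    Summable fun n : ℤ => thetaKernel σ z (n + r) := by
  have := ((summable_jacobiTheta₂_term_iff (z + σ * r) σ).2 hσ).mul_left (thetaKernel σ z r)
  refine this.congr fun n => ?_
  rw [jacobiTheta₂_term, thetaKernel, thetaKernel, ← Complex.exp_add]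
  push_cast
  ring_nf

lemma summable_norm_conj_thetaKernel (hσ : 0 < σ.im) (r : ℝ) :
    Summable fun n : ℤ => ‖conj (thetaKernel σ z (n + r))‖ := by
  simpa only [Complex.norm_conj] using (summable_thetaKernel z hσ r).norm

lemma integrable_thetaKernel_mul_conj (hσ : 0 < σ.im) (s : ℝ) :
    Integrable fun y : ℝ => thetaKernel σ u (y + s) * conj (thetaKernel σ v y) := by
  have hre : 0 < ((2 * π * σ.im : ℝ) : ℂ).re := by rw [ofReal_re]; positivity
  refine ((integrable_cexp_quadratic hre (I * (2 * π * (σ * s + u - conj v))) 0).const_mul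
    (thetaKernel σ u s)).congr (.of_forall fun y => ?_)
  simp only [thetaKernel_add_mul_conj, ← Complex.exp_add]
  ring_nf

lemma integral_thetaKernel_mul_conj (hσ : 0 < σ.im) (s : ℝ) :
    ∫ y : ℝ, thetaKernel σ u (y + s) * conj (thetaKernel σ v y) =
      (1 / √(2 * σ.im) : ℝ) *
        (thetaKernel σ u s * cexp (-π / (2 * σ.im) * (σ * s + u - conj v) ^ 2)) := by
  have hre : 0 < ((2 * π * σ.im : ℝ) : ℂ).re := by rw [ofReal_re]; positivity
  have prefactor : ((π : ℂ) / (2 * π * σ.im : ℝ)) ^ (1 / 2 : ℂ) = (1 / √(2 * σ.im) : ℝ) := by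
    have hdiv : π / (2 * π * σ.im) = 1 / (2 * σ.im) := by field_simp
    rw [← ofReal_div, hdiv, ← Real.sqrt_one, ← Real.sqrt_div zero_le_one, Real.sqrt_one,
      Real.sqrt_eq_rpow, ofReal_cpow (by positivity)]
    norm_num
  have exponent : -(2 * π * (σ * s + u - conj v)) ^ 2 / (4 * (2 * π * σ.im : ℝ)) =
      -π / (2 * σ.im) * (σ * s + u - conj v) ^ 2 := by
    push_cast
    field_simp
    ring
  simp_rw [thetaKernel_add_mul_conj, integral_const_mul]
  rw [fourierIntegral_gaussian hre, prefactor, exponent]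
  ring

end ThetaKernel

lemma realCharTheta_add_mul (r x : ℝ) (z σ : ℂ) :
    realCharTheta r (z + σ * x) σ =
      cexp (-(π * I * σ * x ^ 2 + 2 * π * I * x * z)) * realCharTheta (r + x) z σ := by
  simp_rw [realCharTheta, thetaKernel_add_mul, tsum_mul_left, add_assoc]

lemma realCharTheta_add_mul_mul_conj (r s x : ℝ) (u v σ : ℂ) :
    realCharTheta r (u + σ * x) σ * conj (realCharTheta s (v + σ * x) σ) *
        cexp (-(2 * π * (σ.im * x ^ 2 + 2 * x * v.im)) + 2 * π * I * (u - v) * x) =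
      realCharTheta (r + x) u σ * conj (realCharTheta (s + x) v σ) := by
  have weight_cancels : cexp (-(π * I * σ * x ^ 2 + 2 * π * I * x * u)) *
      conj (cexp (-(π * I * σ * x ^ 2 + 2 * π * I * x * v))) *
        cexp (-(2 * π * (σ.im * x ^ 2 + 2 * x * v.im)) + 2 * π * I * (u - v) * x) = 1 := by
    rw [← Complex.exp_conj, ← Complex.exp_add, ← Complex.exp_add, ← Complex.exp_zero]
    simp only [map_neg, map_add, map_mul, map_pow, conj_I, conj_ofReal, map_ofNat]
    congr 1
    linear_combination π * I * x ^ 2 * conj_eq_sub_two_mul_im_mul_I σ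
      + 2 * π * I * x * conj_eq_sub_two_mul_im_mul_I v
      - (2 * π * σ.im * x ^ 2 + 4 * π * x * v.im) * I_sq
  rw [realCharTheta_add_mul, realCharTheta_add_mul, map_mul]
  linear_combination
    realCharTheta (r + x) u σ * conj (realCharTheta (s + x) v σ) * weight_cancels

lemma theta_mul_conj_mul_cexp_eq (r s : ℚ) (k : ℝ) (m n u v τ : ℂ) {v₂ : ℝ}
    (hv : v.im = τ.im * v₂) (x₁ x₂ : ℝ) :
    theta r (k * (x₁ + τ * x₂) + u) (k * τ) * conj (theta s (k * (x₁ + τ * x₂) + v) (k * τ)) *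
        cexp (-(2 * π * τ.im * (k * x₂ ^ 2 + 2 * x₂ * v₂))) *
        cexp (-(2 * π * I * (m * x₁ + (n - u + v) * x₂))) =
      realCharTheta (r + x₂) (k * x₁ + u) (k * τ) *
        conj (realCharTheta (s + x₂) (k * x₁ + v) (k * τ)) *
        cexp (-(2 * π * I * m * x₁)) * cexp (-(2 * π * I * n * x₂)) := by
  have translate (w : ℂ) : k * (x₁ + τ * x₂) + w = k * x₁ + w + k * τ * x₂ := by ring
  have hkv : ((k * x₁ + v : ℂ).im : ℂ) = τ.im * v₂ := by simp [← ofReal_mul, hv]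
  have hkτ : ((k * τ : ℂ).im : ℂ) = k * τ.im := by simp
  simp only [theta_eq_realCharTheta, translate, ← realCharTheta_add_mul_mul_conj, mul_assoc,
    ← Complex.exp_add]
  rw [hkv, hkτ]
  ring_nf

lemma integral_Icc_cexp_two_pi_I_int_mul (d : ℤ) :
    ∫ x in Set.Icc (0 : ℝ) 1, cexp (2 * π * I * d * x) = if d = 0 then 1 else 0 := by
  rw [integral_Icc_eq_integral_Ioc, ← intervalIntegral.integral_of_le zero_le_one]
  split_ifs with hd
  · simp [hd]
  · have full_period : cexp (2 * π * I * d * (1 : ℝ)) = 1 := by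
      rw [← Complex.exp_int_mul_two_pi_mul_I d]
      push_cast
      ring_nf
    rw [integral_exp_mul_complex (by simp [hd, pi_ne_zero]), full_period]
    simp

lemma integral_Icc_tsum_mul_cexp {ι : Type*} [Countable ι] {F : ι → ℂ} (hF : Summable F)
    (d : ι → ℤ) :
    ∫ x in Set.Icc (0 : ℝ) 1, ∑' i, F i * cexp (2 * π * I * d i * x) =
      ∑' i, if d i = 0 then F i else 0 := by
  have norm_term (i : ι) (x : ℝ) : ‖F i * cexp (2 * π * I * d i * x)‖ = ‖F i‖ := by
    have : 2 * π * I * d i * x = ((2 * π * d i * x : ℝ) : ℂ) * I := by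
      push_cast
      ring
    rw [norm_mul, this, Complex.norm_exp_ofReal_mul_I, mul_one]
  rw [← integral_tsum_of_summable_integral_norm]
  · simp_rw [integral_const_mul, integral_Icc_cexp_two_pi_I_int_mul, mul_ite, mul_one, mul_zero]
  · exact fun i => Continuous.integrableOn_Icc (by fun_prop)
  · simp_rw [norm_term]
    simpa using hF.norm

lemma integral_Icc_tsum_comp_add_int {E : Type*} [NormedAddCommGroup E] [NormedSpace ℝ E]
    {f : ℝ → E} (hf : Integrable f) :
    ∫ x in Set.Icc (0 : ℝ) 1, ∑' i : ℤ, f (x + i) = ∫ x, f x := by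
  rw [← hf.hasSum_intervalIntegral_comp_add_int.tsum_eq, ← integral_tsum_of_summable_integral_norm]
  · simp_rw [integral_Icc_eq_integral_Ioc, intervalIntegral.integral_of_le zero_le_one]
  · exact fun i => (hf.comp_add_right (i : ℝ)).integrableOn
  · simpa only [integral_Icc_eq_integral_Ioc, intervalIntegral.integral_of_le zero_le_one]
      using hf.norm.hasSum_intervalIntegral_comp_add_int.summable

lemma tsum_ite_mul_sub_eq {M : Type*} [AddCommMonoid M] [TopologicalSpace M] {k : ℤ} (hk : k ≠ 0)
    (N : ℤ) (F : ℤ × ℤ → M) :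
    (∑' p : ℤ × ℤ, if k * (p.1 - p.2) = N then F p else 0) =
      if k ∣ N then ∑' i : ℤ, F (i + N / k, i) else 0 := by
  split_ifs with hN
  · obtain ⟨l, rfl⟩ := hN
    have diagonal_injective : Function.Injective fun i : ℤ => (i + l, i) :=
      fun _ _ h => congrArg Prod.snd h
    simp only [mul_right_inj' hk, Int.mul_ediv_cancel_left l hk]
    rw [← diagonal_injective.tsum_eq]
    · simp
    · rintro ⟨j, i⟩ hp
      have hl : j - i = l := by simpa using (ite_ne_right_iff.1 hp).1
      exact ⟨i, Prod.ext (by simp [← hl]) rfl⟩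
  · have no_pair (p : ℤ × ℤ) : k * (p.1 - p.2) ≠ N := fun hp => hN ⟨_, hp.symm⟩
    simp [no_pair]

lemma realCharTheta_mul_conj_eq_tsum {σ : ℂ} (hσ : 0 < σ.im) (u v : ℂ) (r s : ℝ) :
    realCharTheta r u σ * conj (realCharTheta s v σ) =
      ∑' p : ℤ × ℤ, thetaKernel σ u (p.1 + r) * conj (thetaKernel σ v (p.2 + s)) := by
  rw [realCharTheta, realCharTheta, Complex.conj_tsum]
  exact tsum_mul_tsum_of_summable_norm (summable_thetaKernel u hσ r).norm
    (summable_norm_conj_thetaKernel v hσ s)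

lemma summable_thetaKernel_mul_conj {σ : ℂ} (hσ : 0 < σ.im) (u v : ℂ) (r s : ℝ) :
    Summable fun p : ℤ × ℤ => thetaKernel σ u (p.1 + r) * conj (thetaKernel σ v (p.2 + s)) :=
  summable_mul_of_summable_norm (f := fun n : ℤ => thetaKernel σ u (n + r))
    (g := fun n : ℤ => conj (thetaKernel σ v (n + s))) (summable_thetaKernel u hσ r).norm
    (summable_norm_conj_thetaKernel v hσ s)

lemma realCharTheta_mul_conj_mul_cexp_eq_tsum {σ : ℂ} (hσ : 0 < σ.im) (u v m : ℂ)
    (k r s x : ℝ) :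
    realCharTheta r (k * x + u) σ * conj (realCharTheta s (k * x + v) σ) *
        cexp (-(2 * π * I * m * x)) =
      ∑' p : ℤ × ℤ, thetaKernel σ u (p.1 + r) * conj (thetaKernel σ v (p.2 + s)) *
        cexp (2 * π * I * (k * ((p.1 + r) - (p.2 + s)) - m) * x) := by
  simp_rw [realCharTheta_mul_conj_eq_tsum hσ, ← tsum_mul_right, add_comm ((k : ℂ) * x),
    thetaKernel_add, map_mul, ← Complex.exp_conj]
  congr! 2 with p
  have frequency : cexp (2 * π * I * (k * ((p.1 + r) - (p.2 + s)) - m) * x) =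
      cexp (2 * π * I * (p.1 + r : ℝ) * (k * x)) *
        cexp (conj (2 * π * I * (p.2 + s : ℝ) * (k * x))) * cexp (-(2 * π * I * m * x)) := by
    simp only [map_mul, conj_I, conj_ofReal, map_ofNat, ← Complex.exp_add]
    push_cast
    ring_nf
  rw [frequency]
  ring

lemma integral_realCharTheta_mul_conj_mul_cexp {σ : ℂ} (hσ : 0 < σ.im) {k : ℤ} (hk : k ≠ 0)
    (u v : ℂ) {r s : ℝ} {c : ℤ} (hrs : k * (r - s) = c) (m : ℤ) :
    ∫ x in Set.Icc (0 : ℝ) 1, realCharTheta r (k * x + u) σ *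
        conj (realCharTheta s (k * x + v) σ) * cexp (-(2 * π * I * m * x)) =
      if k ∣ m - c then
        ∑' i : ℤ, thetaKernel σ u (i + s + m / k) * conj (thetaKernel σ v (i + s))
      else 0 := by
  have integer_frequency (p : ℤ × ℤ) : (k * ((p.1 + r) - (p.2 + s)) - m : ℂ) =
      (k * (p.1 - p.2) - (m - c) : ℤ) := by
    have hrs' : (k : ℂ) * (r - s) = c := mod_cast hrs
    push_cast
    linear_combination hrs'
  have expand (x : ℝ) := realCharTheta_mul_conj_mul_cexp_eq_tsum hσ u v m k r s x
  simp only [ofReal_intCast, integer_frequency] at expand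
  simp_rw [expand]
  rw [integral_Icc_tsum_mul_cexp (summable_thetaKernel_mul_conj hσ u v r s)]
  simp_rw [sub_eq_zero]
  rw [tsum_ite_mul_sub_eq hk (m - c)
    fun p => thetaKernel σ u (p.1 + r) * conj (thetaKernel σ v (p.2 + s))]
  split_ifs with hdvd
  · have hkR : (k : ℝ) ≠ 0 := Int.cast_ne_zero.2 hk
    have diagonal_characteristic (i : ℤ) :
        ((i + (m - c) / k : ℤ) : ℝ) + r = i + s + m / k := by
      rw [Int.cast_add, Int.cast_div hdvd hkR]
      push_cast
      field_simp
      linear_combination hrs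
    simp_rw [diagonal_characteristic]
  · rfl

lemma integral_tsum_thetaKernel_mul_conj_mul_cexp {σ : ℂ} (hσ : 0 < σ.im) (u v : ℂ) (α s : ℝ)
    (n : ℤ) :
    ∫ x in Set.Icc (0 : ℝ) 1,
        (∑' i : ℤ, thetaKernel σ u (i + (α + x) + s) * conj (thetaKernel σ v (i + (α + x)))) *
          cexp (-(2 * π * I * n * x)) =
      cexp (2 * π * I * n * (α + s)) *
        ∫ y : ℝ, thetaKernel σ (u - n) (y + s) * conj (thetaKernel σ v y) := by
  let f (y : ℝ) : ℂ := thetaKernel σ (u - n) (y + s) * conj (thetaKernel σ v y)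
  have periodization (x : ℝ) :
      (∑' i : ℤ, thetaKernel σ u (i + (α + x) + s) * conj (thetaKernel σ v (i + (α + x)))) *
          cexp (-(2 * π * I * n * x)) =
        cexp (2 * π * I * n * (α + s)) * ∑' i : ℤ, f (x + i + α) := by
    simp_rw [← tsum_mul_right, ← tsum_mul_left]
    congr! 2 with i
    have shift := thetaKernel_mul_cexp_neg_int σ u n i x (α + s)
    rw [show (i : ℝ) + x + (α + s) = i + (α + x) + s by ring, ofReal_add] at shift
    rw [mul_right_comm, shift, mul_assoc, show x + i + α = i + (α + x) by ring]
  simp_rw [periodization, integral_const_mul]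
  rw [integral_Icc_tsum_comp_add_int
    ((integrable_thetaKernel_mul_conj (u - n) v hσ s).comp_add_right α),
    integral_add_right_eq_self f α]

-- With `γ = mτ - n`, the identity `γ - conj γ = 2i m Im τ` is what turns the holomorphic square
-- `(γ + u - conj v)²` into an expression with leading term `|γ|²`.
lemma cexp_mul_thetaKernel_mul_cexp_sq {τ : ℂ} (hτ : τ.im ≠ 0) {k : ℝ} (hk : k ≠ 0)
    (a m n : ℝ) (u v : ℂ) :
    cexp (2 * π * I * n * (a / k + m / k)) * (thetaKernel (k * τ) (u - n) (m / k) *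
        cexp (-π / (2 * (k * τ).im) * (k * τ * (m / k) + (u - n) - conj v) ^ 2)) =
      cexp (-π / (2 * τ.im * k) *
          (normSq (m * τ - n) + 2 * conj (m * τ - n) * u - 2 * (m * τ - n) * conj v +
            (u - conj v) ^ 2) +
        π * I * n / k * (m + 2 * a)) := by
  have hτ' : (τ.im : ℂ) ≠ 0 := ofReal_ne_zero.2 hτ
  have hk' : (k : ℂ) ≠ 0 := ofReal_ne_zero.2 hk
  rw [thetaKernel, ← Complex.exp_add, ← Complex.exp_add, normSq_eq_conj_mul_self, im_ofReal_mul]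
  simp only [map_sub, map_mul, conj_ofReal, conj_eq_sub_two_mul_im_mul_I τ]
  congr 1
  push_cast
  field_simp
  ring

/-- The Fourier coefficients `c_{m,n}` of the smooth section
`θ_{b/k}(kx+u,kτ)·conj(θ_{a/k}(kx+v,kτ))·exp(-2πt(kx₂²+2x₂v₂))` of `L(0,u-v)`:
they vanish unless `m ≡ b - a (mod k)`, in which case they are given by an explicit
Gaussian expression with `γ = mτ - n`. -/
theorem stmt_4
    (τ : ℂ) (t : ℝ) (ht : τ.im = t) (htpos : 0 < t)
    (k : ℕ) (hk : 0 < k) (a b m n : ℤ)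
    (u v : ℂ) (u₁ u₂ v₁ v₂ : ℝ)
    (hu : u = (u₁ : ℂ) + τ * (u₂ : ℂ)) (hv : v = (v₁ : ℂ) + τ * (v₂ : ℂ)) :
    (∫ x₂ in Set.Icc (0:ℝ) 1, ∫ x₁ in Set.Icc (0:ℝ) 1,
      theta ((b : ℚ)/k) ((k : ℂ) * ((x₁ : ℂ) + τ * (x₂ : ℂ)) + u) ((k : ℂ) * τ) *
      (starRingEnd ℂ) (theta ((a : ℚ)/k) ((k : ℂ) * ((x₁ : ℂ) + τ * (x₂ : ℂ)) + v) ((k : ℂ) * τ)) *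
      Complex.exp (-(2 * (π : ℂ) * (t : ℂ) * ((k : ℂ) * (x₂ : ℂ) ^ 2 + 2 * (x₂ : ℂ) * (v₂ : ℂ)))) *
      Complex.exp (-(2 * (π : ℂ) * I * ((m : ℂ) * (x₁ : ℂ) + ((n : ℂ) - u + v) * (x₂ : ℂ))))) =
    (if (k : ℤ) ∣ (m - (b - a)) then
      ((1 / Real.sqrt (2 * t * k) : ℝ) : ℂ) *
        Complex.exp (-(π : ℂ) / (2 * (t : ℂ) * (k : ℂ)) *
          ((Complex.normSq ((m : ℂ) * τ - (n : ℂ)) : ℂ)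
            + 2 * (starRingEnd ℂ) ((m : ℂ) * τ - (n : ℂ)) * u
            - 2 * ((m : ℂ) * τ - (n : ℂ)) * (starRingEnd ℂ) v
            + (u - (starRingEnd ℂ) v) ^ 2)
          + (π : ℂ) * I * (n : ℂ) / (k : ℂ) * ((m : ℂ) + 2 * (a : ℂ)))
    else 0) := by
  subst ht
  have hkR : (k : ℝ) ≠ 0 := mod_cast hk.ne'
  have im_kτ : ((k : ℂ) * τ).im = τ.im * k := by simp [mul_comm]
  have hkτ : 0 < ((k : ℂ) * τ).im := by rw [im_kτ]; positivity
  have hv_im : v.im = τ.im * v₂ := by simp [hv]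
  have characteristics (x₂ : ℝ) : ((k : ℤ) : ℝ) *
      (((b / k : ℚ) : ℝ) + x₂ - (((a / k : ℚ) : ℝ) + x₂)) = (b - a : ℤ) := by
    push_cast
    field_simp
    ring
  have integrand (x₁ x₂ : ℝ) := theta_mul_conj_mul_cexp_eq (b / k) (a / k) k m n u v τ hv_im x₁ x₂
  have inner (x₂ : ℝ) := integral_realCharTheta_mul_conj_mul_cexp hkτ
    (Int.natCast_ne_zero.2 hk.ne') u v (characteristics x₂) m
  have closed_form := cexp_mul_thetaKernel_mul_cexp_sq htpos.ne' hkR a m n u v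
  simp only [ofReal_natCast, ofReal_intCast] at integrand closed_form
  simp only [Int.cast_natCast] at inner
  simp_rw [integrand, integral_mul_const, inner]
  split_ifs with hdvd
  · rw [integral_tsum_thetaKernel_mul_conj_mul_cexp hkτ, integral_thetaKernel_mul_conj _ _ hkτ,
      mul_left_comm, ← closed_form, im_kτ, mul_assoc 2 τ.im]
    push_cast
    rfl
  · simp
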